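/- Let 1 ≤ p ≤ ∞ with conjugate exponent p' (1/p + 1/p' = 1). Let u : M_N → M_N be a linear map and let u† : M_N → M_N be its trace adjoint, i.e. tr(u(x)·y) = tr(x·u†(y)) for all x, y ∈ M_N. Then the regular norm of u relative to p equals the regular norm of u† relative to p': sup_{n ≥ 1} ‖u ⊗ id_{M_n} : (M_N ⊗ M_n, ‖·‖_{S_p^N[M_n]}) → (M_N ⊗ M_n, ‖·‖_{S_p^N[M_n]})‖ = sup_{n ≥ 1} ‖u† ⊗ id_{M_n} : (M_N ⊗ M_n, ‖·‖_{S_{p'}^N[M_n]}) → (M_N ⊗ M_n, ‖·‖_{S_{p'}^N[M_n]})‖. (Matrix-algebra case of the second part of Lemma 2.3.) -/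

import Mathlib

open scoped Kronecker ENNReal Classical ComplexOrder
open Matrix

noncomputable section

/-- The operator norm (`S_∞` norm) of a complex matrix, acting on Euclidean space. -/
def opNorm {ι : Type} [Fintype ι] [DecidableEq ι] (a : Matrix ι ι ℂ) : ℝ :=
  ‖LinearMap.toContinuousLinearMap (Matrix.toEuclideanLin a)‖

/-- The Schatten `p`-norm of a complex matrix: the `ℓ^p` norm of its singular values
(the square roots of the eigenvalues of `aᴴ * a`); for `p = ∞` it is the operator norm. -/
def schattenNorm {ι : Type} [Fintype ι] [DecidableEq ι] (p : ℝ≥0∞) (a : Matrix ι ι ℂ) : ℝ :=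
  if p = ∞ then opNorm a
  else (∑ i, Real.sqrt ((Matrix.posSemidef_conjTranspose_mul_self a).isHermitian.eigenvalues i) ^ p.toReal)
      ^ (1 / p.toReal)

/-- Pisier's vector-valued Schatten norm `‖x‖_{S_p^N[M_n]}` on `M_N ⊗ M_n`:
the infimum of `‖a‖_{S_{2p}} ‖y‖_{S_∞} ‖b‖_{S_{2p}}` over factorizations
`x = (a ⊗ 1) · y · (b ⊗ 1)`. -/
def pisierNorm (p : ℝ≥0∞) {N n : ℕ} (x : Matrix (Fin N × Fin n) (Fin N × Fin n) ℂ) : ℝ :=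
  sInf { r | ∃ (a b : Matrix (Fin N) (Fin N) ℂ)
      (y : Matrix (Fin N × Fin n) (Fin N × Fin n) ℂ),
      x = (a ⊗ₖ (1 : Matrix (Fin n) (Fin n) ℂ)) * y * (b ⊗ₖ (1 : Matrix (Fin n) (Fin n) ℂ)) ∧
      r = schattenNorm (2 * p) a * opNorm y * schattenNorm (2 * p) b }

/-- The amplification `u ⊗ id_{M_n} : M_N ⊗ M_n → M_m ⊗ M_n` of a map `u : M_N → M_m`,
acting as `u` on each `M_n`-block entry. -/
def amp {N m n : ℕ} (u : Matrix (Fin N) (Fin N) ℂ → Matrix (Fin m) (Fin m) ℂ)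
    (x : Matrix (Fin N × Fin n) (Fin N × Fin n) ℂ) : Matrix (Fin m × Fin n) (Fin m × Fin n) ℂ :=
  Matrix.of fun ik jl => u (Matrix.of fun i j => x (i, ik.2) (j, jl.2)) ik.1 jl.1

/-- The amplification `id_{M_n} ⊗ u : M_n ⊗ M_N → M_n ⊗ M_m` of a map `u : M_N → M_m`. -/
def ampLeft {n N m : ℕ} (u : Matrix (Fin N) (Fin N) ℂ → Matrix (Fin m) (Fin m) ℂ)
    (x : Matrix (Fin n × Fin N) (Fin n × Fin N) ℂ) : Matrix (Fin n × Fin m) (Fin n × Fin m) ℂ :=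
  Matrix.of fun ki lj => u (Matrix.of fun i j => x (ki.1, i) (lj.1, j)) ki.2 lj.2

/-- The trace pairing `T : M_k ⊗ M_k → ℂ`, with `T(a ⊗ b) = tr(ᵗa·b)`; writing
`z` as a `k×k` matrix of blocks `z_{ij} ∈ M_k`, `T(z) = Σ_{i,j} (z_{ij})_{ij}`. -/
def tracePair {k : ℕ} (z : Matrix (Fin k × Fin k) (Fin k × Fin k) ℂ) : ℂ :=
  ∑ i : Fin k, ∑ j : Fin k, z (i, i) (j, j)

/-- A map `u : M_N → M_m` is completely positive if all its amplifications
`id_{M_n} ⊗ u` preserve positive semidefiniteness. -/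
def CompletelyPositive {N m : ℕ}
    (u : Matrix (Fin N) (Fin N) ℂ → Matrix (Fin m) (Fin m) ℂ) : Prop :=
  ∀ (n : ℕ) (x : Matrix (Fin n × Fin N) (Fin n × Fin N) ℂ),
    x.PosSemidef → (ampLeft u x).PosSemidef

/-- The regular norm (relative to `p`) of `u : M_N → M_m`: the supremum in `[0,∞]`
over `n ≥ 1` of the norms of the amplifications `u ⊗ id_{M_n}` from
`(M_N ⊗ M_n, ‖·‖_{S_p^N[M_n]})` to `(M_m ⊗ M_n, ‖·‖_{S_p^m[M_n]})`. -/
def regNorm (p : ℝ≥0∞) {N m : ℕ}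
    (u : Matrix (Fin N) (Fin N) ℂ → Matrix (Fin m) (Fin m) ℂ) : ℝ≥0∞ :=
  ⨆ (n : ℕ) (x : Matrix (Fin N × Fin (n + 1)) (Fin N × Fin (n + 1)) ℂ)
    (_ : pisierNorm p x ≤ 1), ENNReal.ofReal (pisierNorm p (amp u x))

/-- Pisier's norm `ρ_p` on `M_n ⊗ M_m` (with `q` the conjugate exponent `p'`):
the infimum of `‖γ‖_{S_{2p}} ‖α‖_{S_{2p'}} ‖g‖_{S_∞} ‖δ‖_{S_{2p}} ‖β‖_{S_{2p'}}`
over factorizations `a = (γ ⊗ α) · g · (δ ⊗ β)`. -/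
def rho (p q : ℝ≥0∞) {n m : ℕ} (a : Matrix (Fin n × Fin m) (Fin n × Fin m) ℂ) : ℝ :=
  sInf { r | ∃ (γ δ : Matrix (Fin n) (Fin n) ℂ) (α β : Matrix (Fin m) (Fin m) ℂ)
      (g : Matrix (Fin n × Fin m) (Fin n × Fin m) ℂ),
      a = (γ ⊗ₖ α) * g * (δ ⊗ₖ β) ∧
      r = schattenNorm (2 * p) γ * schattenNorm (2 * q) α * opNorm g *
          schattenNorm (2 * p) δ * schattenNorm (2 * q) β }

/-- The amplification `u ⊗ id_{M_n}` of a map `u` defined only on a subspace `S ⊆ M_N`,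
applied to an element of `M_N ⊗ M_n` all of whose `M_N`-valued block entries lie in `S`. -/
def ampOn {N m n : ℕ} (S : Submodule ℂ (Matrix (Fin N) (Fin N) ℂ))
    (u : S →ₗ[ℂ] Matrix (Fin m) (Fin m) ℂ)
    (x : Matrix (Fin N × Fin n) (Fin N × Fin n) ℂ)
    (h : ∀ k l : Fin n, (Matrix.of fun i j => x (i, k) (j, l)) ∈ S) :
    Matrix (Fin m × Fin n) (Fin m × Fin n) ℂ :=
  Matrix.of fun ik jl => u ⟨Matrix.of fun i j => x (i, ik.2) (j, jl.2), h ik.2 jl.2⟩ ik.1 jl.1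

end

/-!
By symmetry it is enough to bound the norm of `amp u x` in `S_p[M_n]`, for `x = (γ ⊗ 1) y (δ ⊗ 1)`,
by the regular norm of `v`. Every positive block matrix on `(ℂ^N ⊗ ℂ^n)²` has the form
`(E; Z)(E; Z)ᴴ`, and pairing `amp u x` with its off-diagonal block `Z Eᴴ` can be rewritten, through
the adjunction, as `tracePair ((δ ⊗ 1) * amp v (contraction (Z Eᴴ) y) * (γ ⊗ 1))`. The argument of
`amp v` has small norm in `S_q[M_N]`: moving indices from rows to columns writes `E` as `α K` and
`Z` as `β L` with `‖K‖, ‖L‖ ≤ 1`, where `α²` and `β²` are the partial traces over `ℂ^n` of `E Eᴴ`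
and `Z Zᴴ`. A Hölder inequality for `tracePair`, pairing the `S_{2p}` norms of `γ`, `δ` with the
norm of `S_q[M_N]`, then brings in the regular norm of `v`.

A minimax argument converts these scalar estimates into positive `s`, `t` in the unit ball of `S_p`
for which the block matrix with diagonal `C (s ⊗ 1)`, `C (t ⊗ 1)` and off-diagonal entry `amp u x`
is positive, that is, into a factorization of `amp u x` witnessing that its norm is at most `C`.
-/

section Lp

open WithLp

variable {ι : Type*} [Fintype ι] {p q : ℝ≥0∞}

theorem dotProduct_le_norm_toLp_one_mul (d e : ι → ℝ) :
    d ⬝ᵥ e ≤ ‖toLp 1 d‖ * ‖toLp ∞ e‖ := by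
  rw [PiLp.norm_eq_of_L1, Finset.sum_mul, PiLp.norm_toLp]
  refine Finset.sum_le_sum fun i _ => (le_abs_self _).trans ?_
  rw [abs_mul]
  exact mul_le_mul_of_nonneg_left (norm_le_pi_norm e i) (abs_nonneg _)

theorem dotProduct_le_norm_toLp_mul [h : p.HolderConjugate q] (d e : ι → ℝ) :
    d ⬝ᵥ e ≤ ‖toLp p d‖ * ‖toLp q e‖ := by
  rcases eq_or_ne p ∞ with rfl | hp
  · obtain rfl := (ENNReal.HolderConjugate.unique ∞ q 1)
    rw [dotProduct_comm, mul_comm]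
    exact dotProduct_le_norm_toLp_one_mul e d
  rcases eq_or_ne q ∞ with rfl | hq
  · have := h.symm
    obtain rfl := (ENNReal.HolderConjugate.unique ∞ p 1)
    exact dotProduct_le_norm_toLp_one_mul d e
  have hpq := ENNReal.HolderConjugate.toReal_of_ne_top hp hq
  rw [PiLp.norm_eq_sum hpq.pos, PiLp.norm_eq_sum hpq.symm.pos]
  exact Real.inner_le_Lp_mul_Lq Finset.univ d e hpq

theorem norm_toLp_comp_perm [Fact (1 ≤ p)] (σ : Equiv.Perm ι) (d : ι → ℝ) :
    ‖toLp p (d ∘ σ)‖ = ‖toLp p d‖ :=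
  (LinearIsometryEquiv.piLpCongrLeft p ℝ ℝ σ.symm).norm_map (toLp p d)

theorem dotProduct_mulVec_le_of_mem_doublyStochastic [DecidableEq ι] [h : p.HolderConjugate q]
    {W : Matrix ι ι ℝ} (hW : W ∈ doublyStochastic ℝ ι) (d e : ι → ℝ) :
    d ⬝ᵥ W *ᵥ e ≤ ‖toLp p d‖ * ‖toLp q e‖ := by
  have := h.symm
  have := Fact.mk (ENNReal.HolderConjugate.one_le q p)
  obtain ⟨c, hc, hc1, rfl⟩ := exists_eq_sum_perm_of_mem_doublyStochastic hW
  simp only [sum_mulVec, dotProduct_sum, smul_mulVec, dotProduct_smul, permMatrix_mulVec]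
  calc ∑ σ, c σ • (d ⬝ᵥ (e ∘ σ)) ≤ ∑ σ, c σ • (‖toLp p d‖ * ‖toLp q e‖) := by
        refine Finset.sum_le_sum fun σ _ => smul_le_smul_of_nonneg_left ?_ (hc σ)
        simpa only [norm_toLp_comp_perm] using
          dotProduct_le_norm_toLp_mul (p := p) (q := q) d (e ∘ σ)
    _ = ‖toLp p d‖ * ‖toLp q e‖ := by rw [← Finset.sum_smul, hc1, one_smul]

theorem exists_nonneg_norm_toLp_le_one_le_dotProduct [h : p.HolderConjugate q] {d : ι → ℝ}
    (hd : 0 ≤ d) : ∃ e : ι → ℝ, 0 ≤ e ∧ ‖toLp q e‖ ≤ 1 ∧ ‖toLp p d‖ ≤ d ⬝ᵥ e := by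
  rcases eq_or_ne p ∞ with rfl | hp
  · obtain rfl := ENNReal.HolderConjugate.unique ∞ q 1
    rw [PiLp.norm_toLp]
    rcases isEmpty_or_nonempty ι with _ | _
    · exact ⟨0, le_rfl, by simp, by simp [Subsingleton.elim d 0]⟩
    obtain ⟨i, hi⟩ := Finite.exists_max d
    refine ⟨Pi.single i 1, by simp, by simp, ?_⟩
    rw [dotProduct_single_one, pi_norm_le_iff_of_nonneg (hd i)]
    exact fun j => (Real.norm_of_nonneg (hd j)).trans_le (hi j)
  rcases eq_or_ne q ∞ with rfl | hq
  · have := h.symm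
    obtain rfl := ENNReal.HolderConjugate.unique ∞ p 1
    refine ⟨1, by simp, ?_, ?_⟩
    · rw [PiLp.norm_toLp]
      exact (pi_norm_const_le (1 : ℝ)).trans_eq norm_one
    · rw [PiLp.norm_eq_of_L1, dotProduct_one]
      exact Finset.sum_le_sum fun i _ => (Real.norm_of_nonneg (hd i)).le
  have hpq := ENNReal.HolderConjugate.toReal_of_ne_top hp hq
  lift d to ι → NNReal using hd
  obtain ⟨e, he, hde⟩ := (NNReal.isGreatest_Lp Finset.univ d hpq).1
  refine ⟨fun i => e i, fun i => (e i).2, ?_, ?_⟩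
  · rw [PiLp.norm_eq_sum hpq.symm.pos]
    refine Real.rpow_le_one (by positivity) ?_ (by positivity)
    simp only [Real.norm_of_nonneg (NNReal.coe_nonneg _)]
    exact_mod_cast he
  · rw [PiLp.norm_eq_sum hpq.pos]
    simp only [Real.norm_of_nonneg (NNReal.coe_nonneg _)]
    simpa [dotProduct] using NNReal.coe_le_coe.2 hde.ge

end Lp

section Schatten

open WithLp
open scoped Matrix.Norms.L2Operator MatrixOrder

variable {ι : Type} [Fintype ι] [DecidableEq ι] {p q : ℝ≥0∞}

theorem opNorm_eq_norm (a : Matrix ι ι ℂ) : opNorm a = ‖a‖ := rfl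

theorem exists_unitary_diagonal_of_posSemidef {A : Matrix ι ι ℂ} (hA : A.PosSemidef) :
    ∃ U ∈ unitaryGroup ι ℂ, ∃ d : ι → ℝ, 0 ≤ d ∧ A = U * diagonal (fun i => (d i : ℂ)) * Uᴴ :=
  ⟨hA.1.eigenvectorUnitary, hA.1.eigenvectorUnitary.2, hA.1.eigenvalues, hA.eigenvalues_nonneg,
    hA.1.spectral_theorem⟩

theorem unitary_diagonal_mul_unitary_diagonal {U : Matrix ι ι ℂ} (hU : U ∈ unitaryGroup ι ℂ)
    (d e : ι → ℂ) :
    U * diagonal d * Uᴴ * (U * diagonal e * Uᴴ) = U * diagonal (d * e) * Uᴴ := by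
  have hUU : Uᴴ * U = 1 := mem_unitaryGroup_iff'.1 hU
  calc U * diagonal d * Uᴴ * (U * diagonal e * Uᴴ)
      = U * diagonal d * (Uᴴ * U) * diagonal e * Uᴴ := by simp only [Matrix.mul_assoc]
    _ = U * diagonal (d * e) * Uᴴ := by
        rw [hUU, Matrix.mul_one, Matrix.mul_assoc U, diagonal_mul_diagonal]
        rfl

omit [DecidableEq ι] in
theorem exists_isHermitian_mul_self_of_posSemidef {A : Matrix ι ι ℂ} (hA : A.PosSemidef) :
    ∃ B : Matrix ι ι ℂ, B.IsHermitian ∧ B * B = A := by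
  classical
  exact ⟨CFC.sqrt A, (CFC.sqrt_nonneg A).posSemidef.1, CFC.sqrt_mul_sqrt_self A hA.nonneg⟩

theorem normSq_mem_doublyStochastic {W : Matrix ι ι ℂ} (hW : W ∈ unitaryGroup ι ℂ) :
    W.map Complex.normSq ∈ doublyStochastic ℝ ι := by
  have hrow : W * Wᴴ = 1 := mem_unitaryGroup_iff.1 hW
  have hcol : Wᴴ * W = 1 := mem_unitaryGroup_iff'.1 hW
  refine mem_doublyStochastic_iff_sum.2 ⟨fun _ _ => Complex.normSq_nonneg _,
    fun i => ?_, fun j => ?_⟩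
  · have := congrFun₂ hrow i i
    simp only [Matrix.mul_apply, conjTranspose_apply, one_apply_eq, RCLike.star_def,
      Complex.mul_conj] at this
    exact_mod_cast this
  · have := congrFun₂ hcol j j
    simp only [Matrix.mul_apply, conjTranspose_apply, one_apply_eq, RCLike.star_def,
      mul_comm (starRingEnd ℂ _), Complex.mul_conj] at this
    exact_mod_cast this

theorem trace_diagonal_mul_mul_diagonal_mul_conjTranspose (d e : ι → ℝ) (W : Matrix ι ι ℂ) :
    (diagonal (fun i => (d i : ℂ)) * W * diagonal (fun i => (e i : ℂ)) * Wᴴ).trace =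
      ((d ⬝ᵥ W.map Complex.normSq *ᵥ e : ℝ) : ℂ) := by
  simp only [trace, diag_apply, Matrix.mul_apply (M := _ * _ * _), mul_diagonal, diagonal_mul,
    conjTranspose_apply, dotProduct, mulVec, map_apply, Complex.ofReal_sum, Complex.ofReal_mul,
    Finset.mul_sum, RCLike.star_def]
  refine Finset.sum_congr rfl fun i _ => Finset.sum_congr rfl fun j _ => ?_
  rw [← Complex.mul_conj]
  ring

theorem trace_unitary_diagonal_mul_le [p.HolderConjugate q] {U V : Matrix ι ι ℂ}
    (hU : U ∈ unitaryGroup ι ℂ) (hV : V ∈ unitaryGroup ι ℂ) (d e : ι → ℝ) :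
    (U * diagonal (fun i => (d i : ℂ)) * Uᴴ * (V * diagonal (fun i => (e i : ℂ)) * Vᴴ)).trace.re ≤
      ‖toLp p d‖ * ‖toLp q e‖ := by
  have hW : Uᴴ * V ∈ unitaryGroup ι ℂ := mul_mem (Unitary.star_mem hU) hV
  calc (U * diagonal (fun i => (d i : ℂ)) * Uᴴ *
        (V * diagonal (fun i => (e i : ℂ)) * Vᴴ)).trace.re
      = (diagonal (fun i => (d i : ℂ)) * (Uᴴ * V) * diagonal (fun i => (e i : ℂ)) *
          (Uᴴ * V)ᴴ).trace.re := by
        rw [Matrix.mul_assoc U, Matrix.mul_assoc U, trace_mul_comm U, conjTranspose_mul,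
          conjTranspose_conjTranspose]
        simp only [Matrix.mul_assoc]
    _ = d ⬝ᵥ (Uᴴ * V).map Complex.normSq *ᵥ e := by
        rw [trace_diagonal_mul_mul_diagonal_mul_conjTranspose, Complex.ofReal_re]
    _ ≤ ‖toLp p d‖ * ‖toLp q e‖ :=
        dotProduct_mulVec_le_of_mem_doublyStochastic (normSq_mem_doublyStochastic hW) d e

theorem sum_eigenvalues_eq {A U : Matrix ι ι ℂ} {d : ι → ℝ} (hA : A.IsHermitian)
    (hU : U ∈ unitaryGroup ι ℂ) (h : A = U * diagonal (fun i => (d i : ℂ)) * Uᴴ) (φ : ℝ → ℝ) :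
    ∑ i, φ (hA.eigenvalues i) = ∑ i, φ (d i) := by
  have hUU : Uᴴ * U = 1 := mem_unitaryGroup_iff'.1 hU
  have hroots : A.charpoly.roots = Finset.univ.val.map fun i => (d i : ℂ) := by
    rw [h, charpoly_mul_comm, ← Matrix.mul_assoc, hUU, Matrix.one_mul, charpoly_diagonal,
      Polynomial.roots_prod _ _ (by simp [Finset.prod_ne_zero_iff, Polynomial.X_sub_C_ne_zero])]
    simp
  rw [hA.roots_charpoly_eq_eigenvalues] at hroots
  simpa [Multiset.map_map] using congrArg (fun m => (m.map fun z : ℂ => φ z.re).sum) hroots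

theorem norm_sq_eq_of_conjTranspose_mul_self_eq {a U : Matrix ι ι ℂ} {d : ι → ℝ}
    (hU : U ∈ unitaryGroup ι ℂ) (h : aᴴ * a = U * diagonal (fun i => (d i : ℂ)) * Uᴴ) :
    ‖a‖ ^ 2 = ‖toLp ∞ d‖ := by
  calc ‖a‖ ^ 2 = ‖U * diagonal (fun i => (d i : ℂ)) * Uᴴ‖ := by
        rw [sq, ← l2_opNorm_conjTranspose_mul_self, h]
    _ = ‖diagonal fun i => (d i : ℂ)‖ :=
        (CStarRing.norm_mul_coe_unitary _ (star ⟨U, hU⟩ : unitary (Matrix ι ι ℂ))).trans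
          (CStarRing.norm_coe_unitary_mul ⟨U, hU⟩ _)
    _ = ‖toLp ∞ d‖ := by
        rw [l2_opNorm_diagonal, PiLp.norm_toLp, Pi.norm_def, Pi.norm_def]
        simp only [Complex.nnnorm_real]

theorem schattenNorm_nonneg (p : ℝ≥0∞) (a : Matrix ι ι ℂ) : 0 ≤ schattenNorm p a := by
  unfold schattenNorm
  split_ifs
  · exact norm_nonneg _
  · exact Real.rpow_nonneg (Finset.sum_nonneg fun i _ => Real.rpow_nonneg (Real.sqrt_nonneg _) _) _

theorem schattenNorm_conjTranspose (p : ℝ≥0∞) (a : Matrix ι ι ℂ) :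
    schattenNorm p aᴴ = schattenNorm p a := by
  have heig : (posSemidef_conjTranspose_mul_self aᴴ).isHermitian.eigenvalues =
      (posSemidef_conjTranspose_mul_self a).isHermitian.eigenvalues := by
    rw [IsHermitian.eigenvalues_eq_eigenvalues_iff, conjTranspose_conjTranspose, charpoly_mul_comm]
  simp only [schattenNorm, opNorm_eq_norm, l2_opNorm_conjTranspose, heig]

theorem schattenNorm_two_mul_sq_eq (hp : p ≠ 0) {a U : Matrix ι ι ℂ} {d : ι → ℝ}
    (hU : U ∈ unitaryGroup ι ℂ) (hd : 0 ≤ d)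
    (h : aᴴ * a = U * diagonal (fun i => (d i : ℂ)) * Uᴴ) :
    schattenNorm (2 * p) a ^ 2 = ‖toLp p d‖ := by
  rcases eq_or_ne p ∞ with rfl | hp'
  · rw [ENNReal.mul_top two_ne_zero, schattenNorm, if_pos rfl]
    exact norm_sq_eq_of_conjTranspose_mul_self_eq hU h
  have hp0 : 0 < p.toReal := ENNReal.toReal_pos hp hp'
  have hpow : ∀ i, √(d i) ^ (2 * p.toReal) = ‖d i‖ ^ p.toReal := fun i => by
    rw [Real.rpow_mul (Real.sqrt_nonneg _), Real.rpow_two, Real.sq_sqrt (hd i),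
      Real.norm_of_nonneg (hd i)]
  rw [schattenNorm, if_neg (ENNReal.mul_ne_top (by simp) hp'), PiLp.norm_eq_sum hp0,
    ENNReal.toReal_mul, ENNReal.toReal_ofNat,
    sum_eigenvalues_eq _ hU h fun x => √x ^ (2 * p.toReal), ← Real.rpow_two,
    ← Real.rpow_mul (Finset.sum_nonneg fun i _ => Real.rpow_nonneg (Real.sqrt_nonneg _) _)]
  simp only [hpow]
  congr 1
  field_simp

theorem norm_le_schattenNorm_two_mul (hp : 1 ≤ p) (a : Matrix ι ι ℂ) :
    ‖a‖ ≤ schattenNorm (2 * p) a := by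
  have := Fact.mk hp
  obtain ⟨U, hU, d, hd, ha⟩ :=
    exists_unitary_diagonal_of_posSemidef (posSemidef_conjTranspose_mul_self a)
  refine (sq_le_sq₀ (norm_nonneg a) (schattenNorm_nonneg _ _)).1 ?_
  rw [norm_sq_eq_of_conjTranspose_mul_self_eq hU ha,
    schattenNorm_two_mul_sq_eq (one_pos.trans_le hp).ne' hU hd ha, PiLp.norm_toLp,
    pi_norm_le_iff_of_nonneg (norm_nonneg _)]
  exact PiLp.norm_apply_le (toLp p d)

theorem trace_conjTranspose_mul_self_mul_le [h : p.HolderConjugate q] (a b : Matrix ι ι ℂ) :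
    (aᴴ * a * (bᴴ * b)).trace.re ≤ schattenNorm (2 * p) a ^ 2 * schattenNorm (2 * q) b ^ 2 := by
  have := h.symm
  obtain ⟨U, hU, d, hd, ha⟩ :=
    exists_unitary_diagonal_of_posSemidef (posSemidef_conjTranspose_mul_self a)
  obtain ⟨V, hV, e, he, hb⟩ :=
    exists_unitary_diagonal_of_posSemidef (posSemidef_conjTranspose_mul_self b)
  rw [schattenNorm_two_mul_sq_eq (ENNReal.HolderConjugate.ne_zero p q) hU hd ha,
    schattenNorm_two_mul_sq_eq (ENNReal.HolderConjugate.ne_zero q p) hV he hb, ha, hb]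
  exact trace_unitary_diagonal_mul_le hU hV d e

theorem exists_schattenNorm_le_one_sq_le_trace [h : p.HolderConjugate q] (a : Matrix ι ι ℂ) :
    ∃ b : Matrix ι ι ℂ, schattenNorm (2 * q) b ≤ 1 ∧
      schattenNorm (2 * p) a ^ 2 ≤ (aᴴ * a * (bᴴ * b)).trace.re := by
  have := h.symm
  obtain ⟨U, hU, d, hd, ha⟩ :=
    exists_unitary_diagonal_of_posSemidef (posSemidef_conjTranspose_mul_self a)
  obtain ⟨e, he, he1, hde⟩ := exists_nonneg_norm_toLp_le_one_le_dotProduct (p := p) (q := q) hd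
  have hE : (U * diagonal (fun i => (e i : ℂ)) * Uᴴ).PosSemidef :=
    (PosSemidef.diagonal fun i => Complex.zero_le_real.2 (he i)).mul_mul_conjTranspose_same U
  obtain ⟨b, hb, hbb⟩ := exists_isHermitian_mul_self_of_posSemidef hE
  have hb' : bᴴ * b = U * diagonal (fun i => (e i : ℂ)) * Uᴴ := by rw [hb.eq, hbb]
  have hUU : Uᴴ * U = 1 := mem_unitaryGroup_iff'.1 hU
  refine ⟨b, ?_, ?_⟩
  · refine (sq_le_one_iff₀ (schattenNorm_nonneg _ _)).1 ?_
    rwa [schattenNorm_two_mul_sq_eq (ENNReal.HolderConjugate.ne_zero q p) hU he hb']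
  · rw [schattenNorm_two_mul_sq_eq (ENNReal.HolderConjugate.ne_zero p q) hU hd ha, hb', ha,
      unitary_diagonal_mul_unitary_diagonal hU, trace_mul_comm, ← Matrix.mul_assoc, hUU,
      Matrix.one_mul, trace_diagonal]
    simpa [dotProduct] using hde

end Schatten

section OpNorm

open scoped Matrix.Norms.L2Operator MatrixOrder

variable {ι κ μ : Type} [Fintype ι] [DecidableEq ι] [Fintype κ]

theorem l2_opNorm_le_iff_posSemidef {A : Matrix κ ι ℂ} {c : ℝ} (hc : 0 ≤ c) :
    ‖A‖ ≤ c ↔ (c ^ 2 • (1 : Matrix ι ι ℂ) - Aᴴ * A).PosSemidef := by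
  rw [← sq_le_sq₀ (norm_nonneg A) hc, sq ‖A‖, ← l2_opNorm_conjTranspose_mul_self,
    CStarAlgebra.norm_le_iff_le_algebraMap _ (sq_nonneg c)
      (posSemidef_conjTranspose_mul_self A).nonneg,
    Algebra.algebraMap_eq_smul_one, Matrix.le_iff]

theorem l2_opNorm_kronecker_one_le [Fintype μ] [DecidableEq μ]
    (A : Matrix κ ι ℂ) :
    ‖A ⊗ₖ (1 : Matrix μ μ ℂ)‖ ≤ ‖A‖ := by
  refine (l2_opNorm_le_iff_posSemidef (norm_nonneg _)).2 ?_
  have h := ((l2_opNorm_le_iff_posSemidef (norm_nonneg A)).1 le_rfl).kronecker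
    (PosSemidef.one : (1 : Matrix μ μ ℂ).PosSemidef)
  have hsub : (‖A‖ ^ 2 • (1 : Matrix ι ι ℂ) - Aᴴ * A) ⊗ₖ (1 : Matrix μ μ ℂ) =
      ‖A‖ ^ 2 • 1 - (A ⊗ₖ (1 : Matrix μ μ ℂ))ᴴ * (A ⊗ₖ (1 : Matrix μ μ ℂ)) := by
    rw [eq_sub_iff_add_eq, conjTranspose_kronecker, conjTranspose_one, ← mul_kronecker_mul,
      Matrix.one_mul, ← add_kronecker, sub_add_cancel, smul_kronecker, one_kronecker_one]
  rwa [hsub] at h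

theorem l2_opNorm_transpose_le [DecidableEq κ] (A : Matrix κ ι ℂ) : ‖Aᵀ‖ ≤ ‖A‖ := by
  refine (l2_opNorm_le_iff_posSemidef (norm_nonneg _)).2 ?_
  have h := ((l2_opNorm_le_iff_posSemidef (norm_nonneg A)).1
    (l2_opNorm_conjTranspose A).le).transpose
  rwa [transpose_sub, transpose_mul, transpose_smul, transpose_one,
    conjTranspose_conjTranspose] at h

theorem l2_opNorm_submatrix_equiv_le [DecidableEq κ] (A : Matrix ι ι ℂ) (e : κ ≃ ι) :
    ‖A.submatrix e e‖ ≤ ‖A‖ := by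
  refine (l2_opNorm_le_iff_posSemidef (norm_nonneg _)).2 ?_
  have h := ((l2_opNorm_le_iff_posSemidef (norm_nonneg A)).1 le_rfl).submatrix e
  convert h using 1
  rw [conjTranspose_submatrix, submatrix_mul_equiv, ← submatrix_one_equiv e]
  rfl

omit [DecidableEq ι] in
theorem norm_toLp_two_star (x : ι → ℂ) : ‖WithLp.toLp 2 (star x)‖ = ‖WithLp.toLp 2 x‖ := by
  simp only [EuclideanSpace.norm_eq, Pi.star_apply, norm_star]

theorem norm_dotProduct_mulVec_le (A : Matrix κ ι ℂ) (x : κ → ℂ) (y : ι → ℂ) :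
    ‖x ⬝ᵥ A *ᵥ y‖ ≤ ‖WithLp.toLp 2 x‖ * (‖A‖ * ‖WithLp.toLp 2 y‖) := by
  rw [← norm_toLp_two_star x, dotProduct_comm, ← star_star x, ← EuclideanSpace.inner_toLp_toLp,
    star_star]
  exact (norm_inner_le_norm _ _).trans
    (mul_le_mul_of_nonneg_left (l2_opNorm_mulVec A (WithLp.toLp 2 y)) (norm_nonneg _))

omit [DecidableEq ι] in
theorem exists_isHermitian_commute_mul_mul_self {α : Matrix ι ι ℂ} (hα : α.IsHermitian) :
    ∃ β : Matrix ι ι ℂ, β.IsHermitian ∧ Commute α β ∧ α * β * α = α := by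
  classical
  set U : Matrix ι ι ℂ := hα.eigenvectorUnitary.1
  have hU : U ∈ unitaryGroup ι ℂ := hα.eigenvectorUnitary.2
  set d : ι → ℂ := fun i => hα.eigenvalues i
  have hspec : α = U * diagonal d * Uᴴ := hα.spectral_theorem
  have hd : IsSelfAdjoint d⁻¹ := by
    ext i
    simp [d]
  have hdd : d * d⁻¹ * d = d := funext fun i => mul_inv_mul_cancel (d i)
  refine ⟨U * diagonal d⁻¹ * Uᴴ, isHermitian_mul_mul_conjTranspose U
    (isHermitian_diagonal_of_self_adjoint _ hd), ?_, ?_⟩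
  · rw [hspec, commute_iff_eq, unitary_diagonal_mul_unitary_diagonal hU,
      unitary_diagonal_mul_unitary_diagonal hU, mul_comm]
  · rw [hspec, unitary_diagonal_mul_unitary_diagonal hU,
      unitary_diagonal_mul_unitary_diagonal hU, hdd]

omit [DecidableEq ι] in
theorem exists_norm_le_one_eq_mul [DecidableEq κ] {α : Matrix ι ι ℂ} (hα : α.IsHermitian)
    {E : Matrix ι κ ℂ} (h : E * Eᴴ = α * α) : ∃ K : Matrix ι κ ℂ, ‖K‖ ≤ 1 ∧ E = α * K := by
  classical
  obtain ⟨β, hβ, hαβ, hinv⟩ := exists_isHermitian_commute_mul_mul_self hα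
  have hP : IsStarProjection (α * β) :=
    ⟨by rw [IsIdempotentElem, ← Matrix.mul_assoc, hinv], (hα.commute_iff hβ).1 hαβ⟩
  refine ⟨β * E, ?_, ?_⟩
  · have hK : β * E * (β * E)ᴴ = α * β := by
      calc β * E * (β * E)ᴴ = β * (E * Eᴴ) * β := by
            rw [conjTranspose_mul, hβ.eq]
            simp only [Matrix.mul_assoc]
        _ = β * α * (α * β) := by rw [h]; simp only [Matrix.mul_assoc]
        _ = α * β := by rw [← hαβ.eq, hP.1.eq]
    rw [← sq_le_one_iff₀ (norm_nonneg _), sq, ← l2_opNorm_conjTranspose (β * E),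
      ← l2_opNorm_conjTranspose_mul_self, conjTranspose_conjTranspose, hK]
    exact hP.norm_le
  · have hE : (E - α * β * E) * (E - α * β * E)ᴴ = 0 := by
      rw [conjTranspose_sub, Matrix.mul_sub, conjTranspose_mul, ← Matrix.mul_assoc, Matrix.sub_mul,
        Matrix.mul_assoc (α * β), h, ← Matrix.mul_assoc, hinv, sub_self, Matrix.zero_mul, sub_zero]
    rw [← Matrix.mul_assoc]
    exact sub_eq_zero.1 (self_mul_conjTranspose_eq_zero.1 hE)

end OpNorm

section Polar

open scoped Matrix.Norms.L2Operator MatrixOrder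

variable {ι : Type} [Fintype ι] [DecidableEq ι] {p q : ℝ≥0∞}

omit [Fintype ι] [DecidableEq ι] in
theorem isClosed_setOf_posSemidef [Finite ι] : IsClosed {s : Matrix ι ι ℂ | s.PosSemidef} := by
  have := Fintype.ofFinite ι
  simp only [posSemidef_iff_dotProduct_mulVec, Set.ofPred_and, Set.ofPred_forall]
  refine IsClosed.inter ?_ (isClosed_iInter fun x => ?_)
  · exact isClosed_eq (by fun_prop) continuous_id
  · exact isClosed_le continuous_const (by fun_prop)

/-- The polar, inside the cone of positive semidefinite matrices, of the squares `bᴴ * b` with `b`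
in the unit ball of `S_{2q}`. For conjugate exponents it consists of the squares `aᴴ * a` with `a`
in the unit ball of `S_{2p}`, so it is the positive part of the unit ball of `S_p`. -/
def schattenPolar (ι : Type) [Fintype ι] [DecidableEq ι] (q : ℝ≥0∞) : Set (Matrix ι ι ℂ) :=
  {s | s.PosSemidef ∧ ∀ b : Matrix ι ι ℂ, schattenNorm (2 * q) b ≤ 1 →
    (s * (bᴴ * b)).trace.re ≤ 1}

theorem conjTranspose_mul_self_mem_schattenPolar_iff [p.HolderConjugate q] {a : Matrix ι ι ℂ} :
    aᴴ * a ∈ schattenPolar ι q ↔ schattenNorm (2 * p) a ≤ 1 := by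
  refine ⟨fun ha => ?_, fun ha => ⟨posSemidef_conjTranspose_mul_self a, fun b hb => ?_⟩⟩
  · obtain ⟨b, hb, hab⟩ := exists_schattenNorm_le_one_sq_le_trace (p := p) (q := q) a
    exact (sq_le_one_iff₀ (schattenNorm_nonneg _ _)).1 (hab.trans (ha.2 b hb))
  · exact (trace_conjTranspose_mul_self_mul_le a b).trans <| mul_le_one₀
      (pow_le_one₀ (schattenNorm_nonneg _ _) ha) (sq_nonneg _)
      (pow_le_one₀ (schattenNorm_nonneg _ _) hb)

theorem exists_mem_schattenPolar_sq_le_trace (hq : 1 ≤ q) (a : Matrix ι ι ℂ) :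
    ∃ s ∈ schattenPolar ι q, schattenNorm (2 * q) a ^ 2 ≤ (s * (aᴴ * a)).trace.re := by
  have hpq := ENNReal.HolderConjugate.conjExponent hq
  have hqp := hpq.symm
  obtain ⟨b, hb, hab⟩ :=
    exists_schattenNorm_le_one_sq_le_trace (p := q) (q := q.conjExponent) a
  exact ⟨bᴴ * b, conjTranspose_mul_self_mem_schattenPolar_iff.2 hb, by rwa [trace_mul_comm]⟩

theorem zero_mem_schattenPolar : (0 : Matrix ι ι ℂ) ∈ schattenPolar ι q :=
  ⟨.zero, fun b _ => by simp⟩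

theorem convex_schattenPolar : Convex ℝ (schattenPolar ι q) := by
  refine fun s hs t ht a b ha hb hab => ⟨(hs.1.smul ha).add (ht.1.smul hb), fun c hc => ?_⟩
  simp only [Matrix.add_mul, Matrix.smul_mul, trace_add, trace_smul, Complex.add_re,
    Complex.smul_re, smul_eq_mul]
  nlinarith [hs.2 c hc, ht.2 c hc]

theorem isClosed_schattenPolar : IsClosed (schattenPolar ι q) := by
  have : schattenPolar ι q = {s | s.PosSemidef} ∩
      ⋂ (b : Matrix ι ι ℂ) (_ : schattenNorm (2 * q) b ≤ 1),
        {s | (s * (bᴴ * b)).trace.re ≤ 1} := by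
    ext s
    simp [schattenPolar]
  rw [this]
  refine isClosed_setOf_posSemidef.inter (isClosed_iInter fun b => isClosed_iInter fun _ => ?_)
  exact isClosed_le (by fun_prop) continuous_const

theorem isCompact_schattenPolar (hq : 1 ≤ q) : IsCompact (schattenPolar ι q) := by
  have hpq := (ENNReal.HolderConjugate.conjExponent hq).symm
  have hp := ENNReal.HolderConjugate.one_le q.conjExponent q
  have : ProperSpace (Matrix ι ι ℂ) := FiniteDimensional.proper ℂ _
  refine (isCompact_closedBall (0 : Matrix ι ι ℂ) 1).of_isClosed_subset
    isClosed_schattenPolar fun s hs => mem_closedBall_zero_iff.2 ?_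
  obtain ⟨a, rfl⟩ := CStarAlgebra.nonneg_iff_eq_star_mul_self.1 hs.1.nonneg
  have ha : ‖a‖ ≤ 1 := (norm_le_schattenNorm_two_mul hp a).trans
    (conjTranspose_mul_self_mem_schattenPolar_iff.1 hs)
  rw [star_eq_conjTranspose, l2_opNorm_conjTranspose_mul_self]
  exact mul_le_one₀ ha (norm_nonneg _) ha

theorem exists_pos_smul_mem_schattenPolar (hq : 1 ≤ q) {D : Matrix ι ι ℂ} (hD : D.PosSemidef) :
    ∃ r : ℝ, 0 < r ∧ r • D ∈ schattenPolar ι q := by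
  have hpq := (ENNReal.HolderConjugate.conjExponent hq).symm
  obtain ⟨a, rfl⟩ := CStarAlgebra.nonneg_iff_eq_star_mul_self.1 hD.nonneg
  set c := schattenNorm (2 * q.conjExponent) a ^ 2
  have hc0 : 0 < c + 1 := by positivity
  refine ⟨(c + 1)⁻¹, inv_pos.2 hc0, hD.smul (inv_pos.2 hc0).le, fun b hb => ?_⟩
  rw [Matrix.smul_mul, trace_smul, Complex.smul_re, smul_eq_mul, inv_mul_le_one₀ hc0]
  calc (aᴴ * a * (bᴴ * b)).trace.re ≤ c * schattenNorm (2 * q) b ^ 2 :=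
        trace_conjTranspose_mul_self_mul_le a b
    _ ≤ c * 1 := mul_le_mul_of_nonneg_left (pow_le_one₀ (schattenNorm_nonneg _ _) hb) (sq_nonneg _)
    _ ≤ c + 1 := by linarith

theorem posSemidef_of_forall_mem_schattenPolar (hq : 1 ≤ q) {M : Matrix ι ι ℂ}
    (hM : M.IsHermitian) (h : ∀ D ∈ schattenPolar ι q, 0 ≤ (M * D).trace.re) : M.PosSemidef := by
  refine posSemidef_iff_dotProduct_mulVec.2 ⟨hM, fun x => ?_⟩
  obtain ⟨r, hr, hD⟩ := exists_pos_smul_mem_schattenPolar hq (posSemidef_vecMulVec_self_star x)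
  have hx := h _ hD
  rw [Matrix.mul_smul, trace_smul, Complex.smul_re, smul_eq_mul, mul_nonneg_iff_of_pos_left hr,
    mul_vecMulVec, trace_vecMulVec, dotProduct_comm] at hx
  exact RCLike.nonneg_iff.2 ⟨hx, hM.im_star_dotProduct_mulVec_self x⟩

end Polar

section PisierNorm

open scoped Matrix.Norms.L2Operator

variable {N m n : ℕ} {p : ℝ≥0∞}

theorem pisierNorm_nonneg (p : ℝ≥0∞) (x : Matrix (Fin N × Fin n) (Fin N × Fin n) ℂ) :
    0 ≤ pisierNorm p x := by
  refine Real.sInf_nonneg ?_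
  rintro r ⟨a, b, y, -, rfl⟩
  exact mul_nonneg (mul_nonneg (schattenNorm_nonneg _ _) (norm_nonneg _)) (schattenNorm_nonneg _ _)

theorem pisierNorm_mul_mul_le (p : ℝ≥0∞) (a b : Matrix (Fin N) (Fin N) ℂ)
    (y : Matrix (Fin N × Fin n) (Fin N × Fin n) ℂ) :
    pisierNorm p ((a ⊗ₖ (1 : Matrix (Fin n) (Fin n) ℂ)) * y *
      (b ⊗ₖ (1 : Matrix (Fin n) (Fin n) ℂ))) ≤
      schattenNorm (2 * p) a * ‖y‖ * schattenNorm (2 * p) b := by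
  refine csInf_le ⟨0, ?_⟩ ⟨a, b, y, rfl, rfl⟩
  rintro r ⟨a, b, y, -, rfl⟩
  exact mul_nonneg (mul_nonneg (schattenNorm_nonneg _ _) (norm_nonneg _)) (schattenNorm_nonneg _ _)

theorem le_mul_pisierNorm {x : Matrix (Fin N × Fin n) (Fin N × Fin n) ℂ} {c r : ℝ} (hc : 0 ≤ c)
    (h : ∀ a b y, x = (a ⊗ₖ (1 : Matrix (Fin n) (Fin n) ℂ)) * y *
      (b ⊗ₖ (1 : Matrix (Fin n) (Fin n) ℂ)) →
      r ≤ c * (schattenNorm (2 * p) a * ‖y‖ * schattenNorm (2 * p) b)) :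
    r ≤ c * pisierNorm p x := by
  have hx : x = ((1 : Matrix (Fin N) (Fin N) ℂ) ⊗ₖ (1 : Matrix (Fin n) (Fin n) ℂ)) * x *
      ((1 : Matrix (Fin N) (Fin N) ℂ) ⊗ₖ (1 : Matrix (Fin n) (Fin n) ℂ)) := by
    rw [one_kronecker_one, Matrix.one_mul, Matrix.mul_one]
  rcases hc.eq_or_lt with rfl | hc
  · simpa using h 1 1 x hx
  · rw [← div_le_iff₀' hc]
    refine le_csInf ⟨_, 1, 1, x, hx, rfl⟩ ?_
    rintro _ ⟨a, b, y, hxy, rfl⟩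
    exact (div_le_iff₀' hc).2 (h a b y hxy)

theorem pisierNorm_smul_le {c : ℝ} (hc : 0 ≤ c)
    (x : Matrix (Fin N × Fin n) (Fin N × Fin n) ℂ) :
    pisierNorm p (c • x) ≤ c * pisierNorm p x := by
  refine le_mul_pisierNorm hc fun a b y hx => ?_
  have h := pisierNorm_mul_mul_le p a b (c • y)
  rw [Matrix.mul_smul, Matrix.smul_mul, ← hx, norm_smul, Real.norm_of_nonneg hc] at h
  linarith

theorem amp_smul (u : Matrix (Fin N) (Fin N) ℂ →ₗ[ℂ] Matrix (Fin m) (Fin m) ℂ) (c : ℝ)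
    (x : Matrix (Fin N × Fin n) (Fin N × Fin n) ℂ) : amp u (c • x) = c • amp u x := by
  ext ik jl
  exact congrFun₂ (u.map_smul_of_tower c (of fun i j => x (i, ik.2) (j, jl.2))) ik.1 jl.1

theorem pisierNorm_amp_le {u : Matrix (Fin N) (Fin N) ℂ →ₗ[ℂ] Matrix (Fin m) (Fin m) ℂ}
    (hu : regNorm p u ≠ ⊤) (x : Matrix (Fin N × Fin n) (Fin N × Fin n) ℂ) :
    pisierNorm p (amp u x) ≤ (regNorm p u).toReal * pisierNorm p x := by
  rcases n with _ | n
  · calc pisierNorm p (amp u x) = pisierNorm p ((0 : ℝ) • amp u x) :=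
          congrArg _ (Subsingleton.elim _ _)
      _ ≤ 0 := by simpa using pisierNorm_smul_le le_rfl (amp u x)
      _ ≤ _ := mul_nonneg ENNReal.toReal_nonneg (pisierNorm_nonneg _ _)
  refine le_mul_of_forall_lt₀ fun R hR τ hτ => ?_
  have hτ0 : 0 < τ := (pisierNorm_nonneg p x).trans_lt hτ
  have hunit : pisierNorm p (τ⁻¹ • x) ≤ 1 := by
    refine (pisierNorm_smul_le (inv_pos.2 hτ0).le x).trans ?_
    rw [inv_mul_le_one₀ hτ0]
    exact hτ.le
  have hle : pisierNorm p (amp u (τ⁻¹ • x)) ≤ (regNorm p u).toReal :=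
    (ENNReal.ofReal_le_iff_le_toReal hu).1 (le_iSup_of_le n (le_iSup₂_of_le _ hunit le_rfl))
  calc pisierNorm p (amp u x) = pisierNorm p (τ • amp u (τ⁻¹ • x)) := by
        rw [amp_smul, smul_inv_smul₀ hτ0.ne']
    _ ≤ τ * pisierNorm p (amp u (τ⁻¹ • x)) := pisierNorm_smul_le hτ0.le _
    _ ≤ R * τ := by
        rw [mul_comm]
        exact mul_le_mul_of_nonneg_right (hle.trans hR.le) hτ0.le

end PisierNorm

section TracePairing

open scoped Matrix.Norms.L2Operator

theorem norm_toLp_vec_sq {ι κ : Type*} [Fintype ι] [Fintype κ] (a : Matrix ι κ ℂ) :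
    ‖WithLp.toLp 2 (vec a)‖ ^ 2 = (aᴴ * a).trace.re := by
  rw [← star_vec_dotProduct_vec, dotProduct_comm, ← EuclideanSpace.inner_toLp_toLp,
    inner_self_eq_norm_sq_to_K]
  norm_cast

theorem norm_toLp_vec_transpose {ι κ : Type*} [Fintype ι] [Fintype κ] (a : Matrix ι κ ℂ) :
    ‖WithLp.toLp 2 (vec aᵀ)‖ = ‖WithLp.toLp 2 (vec a)‖ := by
  refine (sq_eq_sq₀ (norm_nonneg _) (norm_nonneg _)).1 ?_
  rw [norm_toLp_vec_sq, norm_toLp_vec_sq, ← trace_transpose, transpose_mul, transpose_transpose]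
  exact congrArg Complex.re (trace_mul_comm a aᴴ)

theorem norm_toLp_vec_mul_le {ι : Type} [Fintype ι] [DecidableEq ι] {p q : ℝ≥0∞}
    [p.HolderConjugate q] (a b : Matrix ι ι ℂ) :
    ‖WithLp.toLp 2 (vec (a * b))‖ ≤ schattenNorm (2 * p) a * schattenNorm (2 * q) b := by
  refine (sq_le_sq₀ (norm_nonneg _)
    (mul_nonneg (schattenNorm_nonneg _ _) (schattenNorm_nonneg _ _))).1 ?_
  calc ‖WithLp.toLp 2 (vec (a * b))‖ ^ 2 = (aᴴ * a * (bᴴᴴ * bᴴ)).trace.re := by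
        rw [norm_toLp_vec_sq, conjTranspose_mul, conjTranspose_conjTranspose, Matrix.mul_assoc,
          trace_mul_comm]
        simp only [Matrix.mul_assoc]
    _ ≤ (schattenNorm (2 * p) a * schattenNorm (2 * q) b) ^ 2 := by
        rw [mul_pow, ← schattenNorm_conjTranspose _ b]
        exact trace_conjTranspose_mul_self_mul_le a bᴴ

variable {N : ℕ} {p q : ℝ≥0∞}

theorem tracePair_eq_dotProduct (z : Matrix (Fin N × Fin N) (Fin N × Fin N) ℂ) :
    tracePair z = vec 1 ⬝ᵥ z *ᵥ vec 1 := by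
  simp [tracePair, dotProduct, mulVec, Fintype.sum_prod_type, Matrix.one_apply]

theorem tracePair_mul_mul (a b : Matrix (Fin N) (Fin N) ℂ)
    (z : Matrix (Fin N × Fin N) (Fin N × Fin N) ℂ) :
    tracePair ((a ⊗ₖ (1 : Matrix (Fin N) (Fin N) ℂ)) * z *
      (b ⊗ₖ (1 : Matrix (Fin N) (Fin N) ℂ))) = vec a ⬝ᵥ z *ᵥ vec bᵀ := by
  rw [tracePair_eq_dotProduct, ← mulVec_mulVec, ← mulVec_mulVec, dotProduct_mulVec,
    vec_vecMul_kronecker, kronecker_mulVec_vec]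
  simp only [transpose_one, Matrix.one_mul]

theorem norm_tracePair_mul_mul_le [h : p.HolderConjugate q] (a b : Matrix (Fin N) (Fin N) ℂ)
    (x : Matrix (Fin N × Fin N) (Fin N × Fin N) ℂ) :
    ‖tracePair ((a ⊗ₖ (1 : Matrix (Fin N) (Fin N) ℂ)) * x *
      (b ⊗ₖ (1 : Matrix (Fin N) (Fin N) ℂ)))‖ ≤
      schattenNorm (2 * p) a * schattenNorm (2 * p) b * pisierNorm q x := by
  have := h.symm
  refine le_mul_pisierNorm (mul_nonneg (schattenNorm_nonneg _ _) (schattenNorm_nonneg _ _))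
    fun c d z hx => ?_
  have hassoc : (a ⊗ₖ (1 : Matrix (Fin N) (Fin N) ℂ)) * x *
      (b ⊗ₖ (1 : Matrix (Fin N) (Fin N) ℂ)) = ((a * c) ⊗ₖ (1 : Matrix (Fin N) (Fin N) ℂ)) * z *
      ((d * b) ⊗ₖ (1 : Matrix (Fin N) (Fin N) ℂ)) := by
    rw [hx, ← Matrix.one_mul (1 : Matrix (Fin N) (Fin N) ℂ), mul_kronecker_mul, mul_kronecker_mul]
    simp only [Matrix.one_mul, Matrix.mul_assoc]
  calc _ = ‖vec (a * c) ⬝ᵥ z *ᵥ vec (d * b)ᵀ‖ := by rw [hassoc, tracePair_mul_mul]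
    _ ≤ ‖WithLp.toLp 2 (vec (a * c))‖ * (‖z‖ * ‖WithLp.toLp 2 (vec (d * b))‖) := by
        rw [← norm_toLp_vec_transpose (d * b)]
        exact norm_dotProduct_mulVec_le z _ _
    _ ≤ schattenNorm (2 * p) a * schattenNorm (2 * q) c *
          (‖z‖ * (schattenNorm (2 * q) d * schattenNorm (2 * p) b)) := by
        have := schattenNorm_nonneg (2 * p) a
        have := schattenNorm_nonneg (2 * q) c
        gcongr
        · exact norm_toLp_vec_mul_le a c
        · exact norm_toLp_vec_mul_le d b
    _ = _ := by ring

end TracePairing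

section Contraction

open scoped Matrix.Norms.L2Operator

variable {ι κ ν J : Type*}

/-- The `(k, l)` block, a matrix indexed by `ι`, of an element of the tensor product
`M_ι ⊗ M_ν`. -/
def tensorBlock (x : Matrix (ι × ν) (ι × ν) ℂ) (k l : ν) : Matrix ι ι ℂ :=
  of fun i j => x (i, k) (j, l)

/-- The element of `M_ι ⊗ M_κ` obtained from `Y ∈ M_ι ⊗ M_ν` and `y ∈ M_κ ⊗ M_ν` by pairing the
legs in `M_ν` through the trace and transposing the leg in `M_κ`: on elementary tensors,
`(a ⊗ b, c ⊗ d) ↦ tr(b d) (a ⊗ cᵀ)`. The transpose makes it compatible with `tracePair`. -/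
def contraction [Fintype ν] (Y : Matrix (ι × ν) (ι × ν) ℂ) (y : Matrix (κ × ν) (κ × ν) ℂ) :
    Matrix (ι × κ) (ι × κ) ℂ :=
  of fun js ir => ∑ k, ∑ l, y (ir.2, k) (js.2, l) * Y (js.1, l) (ir.1, k)

/-- The matrix with rows indexed by `ι` and columns by `ν × J` obtained by moving the row index
`ν` to the columns. -/
def flattenRows (Z : Matrix (ι × ν) J ℂ) : Matrix ι (ν × J) ℂ :=
  of fun i kJ => Z (i, kJ.1) kJ.2

theorem tensorBlock_contraction [Fintype ν] (Y : Matrix (ι × ν) (ι × ν) ℂ)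
    (y : Matrix (κ × ν) (κ × ν) ℂ) (s r : κ) :
    tensorBlock (contraction Y y) s r = ∑ k, ∑ l, y (r, k) (s, l) • tensorBlock Y l k := by
  ext j i
  simp [tensorBlock, contraction, Matrix.sum_apply]

theorem tensorBlock_mul_mul [Fintype ι] [Fintype ν] [DecidableEq ν] (a b : Matrix ι ι ℂ)
    (x : Matrix (ι × ν) (ι × ν) ℂ) (k l : ν) :
    tensorBlock ((a ⊗ₖ (1 : Matrix ν ν ℂ)) * x * (b ⊗ₖ (1 : Matrix ν ν ℂ))) k l =
      a * tensorBlock x k l * b := by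
  ext i j
  simp [tensorBlock, Matrix.mul_apply, Fintype.sum_prod_type, Matrix.one_apply]

theorem ext_tensorBlock {x y : Matrix (ι × ν) (ι × ν) ℂ}
    (h : ∀ k l, tensorBlock x k l = tensorBlock y k l) : x = y := by
  ext ⟨i, k⟩ ⟨j, l⟩
  exact congrFun₂ (h k l) i j

theorem trace_mul_eq_sum_tensorBlock [Fintype ι] [Fintype ν] (x y : Matrix (ι × ν) (ι × ν) ℂ) :
    (x * y).trace = ∑ k, ∑ l, (tensorBlock x k l * tensorBlock y l k).trace := by
  simp only [trace, diag_apply, Matrix.mul_apply, Fintype.sum_prod_type]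
  rw [Finset.sum_comm]
  refine Finset.sum_congr rfl fun k _ => ?_
  rw [Finset.sum_comm (s := Finset.univ (α := ν))]
  refine Finset.sum_congr rfl fun i _ => ?_
  exact Finset.sum_comm

theorem contraction_mul_mul [Fintype ι] [Fintype κ] [DecidableEq κ] [Fintype ν] [DecidableEq ν]
    (a b : Matrix ι ι ℂ) (Y : Matrix (ι × ν) (ι × ν) ℂ) (y : Matrix (κ × ν) (κ × ν) ℂ) :
    contraction ((a ⊗ₖ (1 : Matrix ν ν ℂ)) * Y * (b ⊗ₖ (1 : Matrix ν ν ℂ))) y =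
      (a ⊗ₖ (1 : Matrix κ κ ℂ)) * contraction Y y * (b ⊗ₖ (1 : Matrix κ κ ℂ)) := by
  refine ext_tensorBlock fun s r => ?_
  simp only [tensorBlock_mul_mul, tensorBlock_contraction, Matrix.mul_sum, Matrix.sum_mul,
    Matrix.mul_smul, Matrix.smul_mul]

theorem contraction_mul_conjTranspose [Fintype κ] [Fintype ν] [Fintype J] [DecidableEq κ]
    [DecidableEq J] (Z E : Matrix (ι × ν) J ℂ) (y : Matrix (κ × ν) (κ × ν) ℂ) :
    contraction (Z * Eᴴ) y = (flattenRows Z ⊗ₖ (1 : Matrix κ κ ℂ)) *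
      (yᵀ ⊗ₖ (1 : Matrix J J ℂ)).submatrix
        ((Equiv.prodComm (ν × J) κ).trans (Equiv.prodAssoc κ ν J).symm)
        ((Equiv.prodComm (ν × J) κ).trans (Equiv.prodAssoc κ ν J).symm) *
      ((flattenRows E)ᴴ ⊗ₖ (1 : Matrix κ κ ℂ)) := by
  ext ⟨j, s⟩ ⟨i, r⟩
  simp only [contraction, flattenRows, Matrix.mul_apply, conjTranspose_apply, of_apply,
    Equiv.coe_trans, Equiv.coe_prodComm, kroneckerMap_apply, Matrix.one_apply, mul_ite, mul_one,
    mul_zero, submatrix_apply, Function.comp_apply, Equiv.prodAssoc_symm_apply, Prod.fst_swap,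
    Prod.snd_swap, transpose_apply, ite_mul, zero_mul, Fintype.sum_prod_type,
    Finset.sum_ite_irrel, Finset.sum_ite_eq, Finset.mem_univ, ↓reduceIte, Finset.sum_const_zero,
    Finset.sum_ite_eq']
  refine Finset.sum_congr rfl fun k _ => ?_
  simp only [Finset.mul_sum, Finset.sum_mul]
  rw [Finset.sum_comm]
  refine Finset.sum_congr rfl fun l _ => Finset.sum_congr rfl fun z _ => ?_
  ring

theorem tracePair_contraction {N : ℕ} [Fintype ν] (Y y : Matrix (Fin N × ν) (Fin N × ν) ℂ) :
    tracePair (contraction Y y) = (y * Y).trace := by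
  simp only [tracePair, contraction, of_apply, trace, diag_apply, Matrix.mul_apply,
    Fintype.sum_prod_type]
  rw [Finset.sum_comm]
  refine Finset.sum_congr rfl fun r _ => ?_
  rw [Finset.sum_comm]

variable {N m n : ℕ} {p q : ℝ≥0∞} {u : Matrix (Fin N) (Fin N) ℂ →ₗ[ℂ] Matrix (Fin m) (Fin m) ℂ}
  {v : Matrix (Fin m) (Fin m) ℂ →ₗ[ℂ] Matrix (Fin N) (Fin N) ℂ}

theorem tensorBlock_amp (u : Matrix (Fin N) (Fin N) ℂ →ₗ[ℂ] Matrix (Fin m) (Fin m) ℂ)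
    (x : Matrix (Fin N × Fin n) (Fin N × Fin n) ℂ) (k l : Fin n) :
    tensorBlock (amp u x) k l = u (tensorBlock x k l) :=
  rfl

theorem amp_contraction (v : Matrix (Fin m) (Fin m) ℂ →ₗ[ℂ] Matrix (Fin N) (Fin N) ℂ)
    {k : ℕ} (Y : Matrix (Fin m × Fin n) (Fin m × Fin n) ℂ)
    (y : Matrix (Fin k × Fin n) (Fin k × Fin n) ℂ) :
    amp v (contraction Y y) = contraction (amp v Y) y := by
  refine ext_tensorBlock fun s r => ?_
  simp only [tensorBlock_amp, tensorBlock_contraction, map_sum, map_smul]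

theorem trace_amp_mul (hadj : ∀ x y, (u x * y).trace = (x * v y).trace)
    (x : Matrix (Fin N × Fin n) (Fin N × Fin n) ℂ) (Y : Matrix (Fin m × Fin n) (Fin m × Fin n) ℂ) :
    (amp u x * Y).trace = (x * amp v Y).trace := by
  simp only [trace_mul_eq_sum_tensorBlock, tensorBlock_amp, hadj]

theorem trace_amp_mul_mul_mul (hadj : ∀ x y, (u x * y).trace = (x * v y).trace)
    (γ δ : Matrix (Fin N) (Fin N) ℂ) (y : Matrix (Fin N × Fin n) (Fin N × Fin n) ℂ)
    (Y : Matrix (Fin m × Fin n) (Fin m × Fin n) ℂ) :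
    (amp u ((γ ⊗ₖ (1 : Matrix (Fin n) (Fin n) ℂ)) * y *
      (δ ⊗ₖ (1 : Matrix (Fin n) (Fin n) ℂ))) * Y).trace =
      tracePair ((δ ⊗ₖ (1 : Matrix (Fin N) (Fin N) ℂ)) * amp v (contraction Y y) *
        (γ ⊗ₖ (1 : Matrix (Fin N) (Fin N) ℂ))) := by
  rw [trace_amp_mul hadj, amp_contraction, ← contraction_mul_mul, tracePair_contraction,
    Matrix.mul_assoc, Matrix.mul_assoc, trace_mul_comm]
  simp only [Matrix.mul_assoc]

theorem pisierNorm_contraction_le {J : Type} [Fintype J] {α β : Matrix (Fin m) (Fin m) ℂ}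
    (hα : α.IsHermitian) (hβ : β.IsHermitian) {E Z : Matrix (Fin m × Fin n) J ℂ}
    (hE : flattenRows E * (flattenRows E)ᴴ = α * α) (hZ : flattenRows Z * (flattenRows Z)ᴴ = β * β)
    (y : Matrix (Fin N × Fin n) (Fin N × Fin n) ℂ) :
    pisierNorm q (contraction (Z * Eᴴ) y) ≤
      schattenNorm (2 * q) β * ‖y‖ * schattenNorm (2 * q) α := by
  classical
  obtain ⟨K, hK, hEK⟩ := exists_norm_le_one_eq_mul hα hE
  obtain ⟨L, hL, hZL⟩ := exists_norm_le_one_eq_mul hβ hZ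
  set W : Matrix ((Fin n × J) × Fin N) ((Fin n × J) × Fin N) ℂ :=
    (yᵀ ⊗ₖ (1 : Matrix J J ℂ)).submatrix
      ((Equiv.prodComm (Fin n × J) (Fin N)).trans (Equiv.prodAssoc (Fin N) (Fin n) J).symm)
      ((Equiv.prodComm (Fin n × J) (Fin N)).trans (Equiv.prodAssoc (Fin N) (Fin n) J).symm)
    with hW_def
  have hW : ‖W‖ ≤ ‖y‖ := (l2_opNorm_submatrix_equiv_le _ _).trans
    ((l2_opNorm_kronecker_one_le _).trans (l2_opNorm_transpose_le y))
  set X := (L ⊗ₖ (1 : Matrix (Fin N) (Fin N) ℂ)) * W * (Kᴴ ⊗ₖ (1 : Matrix (Fin N) (Fin N) ℂ))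
    with hX_def
  have hX : ‖X‖ ≤ ‖y‖ := calc
    ‖X‖ ≤ ‖L ⊗ₖ (1 : Matrix (Fin N) (Fin N) ℂ)‖ * ‖W‖ * ‖Kᴴ ⊗ₖ (1 : Matrix (Fin N) (Fin N) ℂ)‖ :=
      (l2_opNorm_mul _ _).trans (by gcongr; exact l2_opNorm_mul _ _)
    _ ≤ 1 * ‖y‖ * 1 := by
      gcongr
      · exact (l2_opNorm_kronecker_one_le _).trans hL
      · exact (l2_opNorm_kronecker_one_le _).trans ((l2_opNorm_conjTranspose K).trans_le hK)
    _ = ‖y‖ := by ring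
  have hfactor : contraction (Z * Eᴴ) y =
      (β ⊗ₖ (1 : Matrix (Fin N) (Fin N) ℂ)) * X * (α ⊗ₖ (1 : Matrix (Fin N) (Fin N) ℂ)) := by
    rw [contraction_mul_conjTranspose, hEK, hZL, conjTranspose_mul, hα.eq,
      ← Matrix.one_mul (1 : Matrix (Fin N) (Fin N) ℂ), mul_kronecker_mul, mul_kronecker_mul]
    simp only [Matrix.one_mul, Matrix.mul_assoc, hX_def, hW_def]
  rw [hfactor]
  refine (pisierNorm_mul_mul_le q β α X).trans ?_
  have := schattenNorm_nonneg (2 * q) α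
  have := schattenNorm_nonneg (2 * q) β
  gcongr

theorem norm_trace_amp_mul_le [p.HolderConjugate q]
    (hadj : ∀ x y, (u x * y).trace = (x * v y).trace) (hv : regNorm q v ≠ ⊤)
    (γ δ : Matrix (Fin N) (Fin N) ℂ) (y : Matrix (Fin N × Fin n) (Fin N × Fin n) ℂ)
    (Y : Matrix (Fin m × Fin n) (Fin m × Fin n) ℂ) :
    ‖(amp u ((γ ⊗ₖ (1 : Matrix (Fin n) (Fin n) ℂ)) * y *
      (δ ⊗ₖ (1 : Matrix (Fin n) (Fin n) ℂ))) * Y).trace‖ ≤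
      schattenNorm (2 * p) δ * schattenNorm (2 * p) γ *
        ((regNorm q v).toReal * pisierNorm q (contraction Y y)) := by
  rw [trace_amp_mul_mul_mul hadj]
  exact (norm_tracePair_mul_mul_le δ γ _).trans (mul_le_mul_of_nonneg_left
    (pisierNorm_amp_le hv _) (mul_nonneg (schattenNorm_nonneg _ _) (schattenNorm_nonneg _ _)))

end Contraction

section Domination

open scoped Matrix.Norms.L2Operator MatrixOrder

theorem exists_posSemidef_of_forall_mem_schattenPolar {ι F : Type} [Fintype ι] [DecidableEq ι]
    [TopologicalSpace F] [AddCommGroup F] [Module ℝ F] [IsTopologicalAddGroup F]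
    [ContinuousSMul ℝ F] {q : ℝ≥0∞} (hq : 1 ≤ q) {K : Set F} (hK : IsCompact K)
    (hK_convex : Convex ℝ K) (hK_nonempty : K.Nonempty) {M : F → Matrix ι ι ℂ}
    (hM_cont : Continuous M)
    (hM_affine : ∀ (s t : F) (a b : ℝ), a + b = 1 → M (a • s + b • t) = a • M s + b • M t)
    (hM : ∀ s ∈ K, (M s).IsHermitian)
    (h : ∀ D ∈ schattenPolar ι q, ∃ s ∈ K, 0 ≤ (M s * D).trace.re) :
    ∃ s ∈ K, (M s).PosSemidef := by
  obtain ⟨D₀, hD₀, s₀, hs₀, hsaddle⟩ := Sion.exists_isSaddlePointOn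
    (f := fun (D : Matrix ι ι ℂ) (s : F) => (M s * D).trace.re)
    ⟨0, zero_mem_schattenPolar⟩ convex_schattenPolar (isCompact_schattenPolar hq)
    (fun s _ => (Continuous.continuousOn (by fun_prop)).lowerSemicontinuousOn)
    (fun s _ => ConvexOn.quasiconvexOn ⟨convex_schattenPolar, fun D _ D' _ a b _ _ _ => by
      simp only [Matrix.mul_add, Matrix.mul_smul, trace_add, trace_smul, Complex.add_re,
        Complex.smul_re, le_refl]⟩)
    hK_convex hK_nonempty hK
    (fun D _ => (Continuous.continuousOn (by fun_prop)).upperSemicontinuousOn)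
    (fun D _ => ConcaveOn.quasiconcaveOn ⟨hK_convex, fun s _ t _ a b _ _ hab => by
      simp only [hM_affine s t a b hab, Matrix.add_mul, Matrix.smul_mul, trace_add, trace_smul,
        Complex.add_re, Complex.smul_re, le_refl]⟩)
  obtain ⟨s, hs, hnonneg⟩ := h D₀ hD₀
  exact ⟨s₀, hs₀, posSemidef_of_forall_mem_schattenPolar hq (hM s₀ hs₀) fun D hD =>
    hnonneg.trans (hsaddle D hD s hs)⟩

theorem trace_fromBlocks {m n R : Type*} [Fintype m] [Fintype n] [AddCommMonoid R]
    (A : Matrix m m R) (B : Matrix m n R) (C : Matrix n m R) (D : Matrix n n R) :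
    (fromBlocks A B C D).trace = A.trace + D.trace := by
  simp only [trace, diag_apply, Fintype.sum_sum_type, fromBlocks_apply₁₁, fromBlocks_apply₂₂]

variable {ι ν : Type} [DecidableEq ν]

/-- The block matrix whose positivity expresses that `w ∈ M_ι ⊗ M_ν` is dominated by `C` times the
pair `s ⊗ 1`, `t ⊗ 1`. -/
noncomputable def dominationMatrix (C : ℝ) (w : Matrix (ι × ν) (ι × ν) ℂ)
    (st : Matrix ι ι ℂ × Matrix ι ι ℂ) :
    Matrix ((ι × ν) ⊕ (ι × ν)) ((ι × ν) ⊕ (ι × ν)) ℂ :=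
  fromBlocks (C • (st.1 ⊗ₖ (1 : Matrix ν ν ℂ))) w wᴴ (C • (st.2 ⊗ₖ (1 : Matrix ν ν ℂ)))

theorem continuous_dominationMatrix (C : ℝ) (w : Matrix (ι × ν) (ι × ν) ℂ) :
    Continuous (dominationMatrix C w) := by
  have hkronecker : Continuous fun s : Matrix ι ι ℂ => s ⊗ₖ (1 : Matrix ν ν ℂ) :=
    continuous_matrix fun i j => by
      simp only [kroneckerMap_apply]
      fun_prop
  exact Continuous.matrix_fromBlocks ((hkronecker.comp continuous_fst).const_smul C)
    continuous_const continuous_const ((hkronecker.comp continuous_snd).const_smul C)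

theorem dominationMatrix_affine (C : ℝ) (w : Matrix (ι × ν) (ι × ν) ℂ)
    (s t : Matrix ι ι ℂ × Matrix ι ι ℂ) (a b : ℝ) (hab : a + b = 1) :
    dominationMatrix C w (a • s + b • t) =
      a • dominationMatrix C w s + b • dominationMatrix C w t := by
  simp only [dominationMatrix, fromBlocks_smul, fromBlocks_add, ← add_smul, hab, one_smul,
    Prod.fst_add, Prod.snd_add, Prod.smul_fst, Prod.smul_snd, add_kronecker, smul_kronecker,
    smul_add, smul_comm C]

theorem isHermitian_dominationMatrix (C : ℝ) (w : Matrix (ι × ν) (ι × ν) ℂ)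
    {st : Matrix ι ι ℂ × Matrix ι ι ℂ} (hs : st.1.IsHermitian) (ht : st.2.IsHermitian) :
    (dominationMatrix C w st).IsHermitian := by
  have hdiag : ∀ s : Matrix ι ι ℂ, s.IsHermitian → (C • (s ⊗ₖ (1 : Matrix ν ν ℂ))).IsHermitian :=
    fun s hs => by
      rw [IsHermitian, conjTranspose_smul, conjTranspose_kronecker, hs.eq, conjTranspose_one,
        star_trivial]
  exact IsHermitian.fromBlocks (hdiag _ hs) rfl (hdiag _ ht)

variable [Fintype ι] [Fintype ν]

theorem trace_kronecker_one_mul {J : Type} [Fintype J] (s : Matrix ι ι ℂ)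
    (E : Matrix (ι × ν) J ℂ) :
    ((s ⊗ₖ (1 : Matrix ν ν ℂ)) * (E * Eᴴ)).trace =
      (s * (flattenRows E * (flattenRows E)ᴴ)).trace := by
  simp only [trace, diag_apply, Matrix.mul_apply, Fintype.sum_prod_type, kroneckerMap_apply,
    Matrix.one_apply, flattenRows, of_apply, conjTranspose_apply, mul_ite, mul_one, mul_zero,
    ite_mul, zero_mul, Finset.sum_ite_eq, Finset.mem_univ, if_true]
  refine Finset.sum_congr rfl fun i _ => ?_
  rw [Finset.sum_comm]
  exact Finset.sum_congr rfl fun j _ => (Finset.mul_sum _ _ _).symm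

theorem trace_dominationMatrix_mul_re {J : Type} [Fintype J] (C : ℝ)
    (w : Matrix (ι × ν) (ι × ν) ℂ) (s t : Matrix ι ι ℂ) (E Z : Matrix (ι × ν) J ℂ) :
    (dominationMatrix C w (s, t) * (fromRows E Z * (fromRows E Z)ᴴ)).trace.re =
      C * ((s * (flattenRows E * (flattenRows E)ᴴ)).trace.re +
        (t * (flattenRows Z * (flattenRows Z)ᴴ)).trace.re) + 2 * (w * (Z * Eᴴ)).trace.re := by
  have hconj : (wᴴ * (E * Zᴴ)).trace.re = (w * (Z * Eᴴ)).trace.re := by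
    rw [← conjTranspose_conjTranspose E, ← conjTranspose_mul, ← conjTranspose_mul,
      trace_conjTranspose, trace_mul_comm, conjTranspose_conjTranspose]
    exact Complex.conj_re _
  rw [conjTranspose_fromRows_eq_fromCols_conjTranspose, fromRows_mul_fromCols, dominationMatrix,
    fromBlocks_multiply, trace_fromBlocks]
  simp only [Matrix.smul_mul, trace_add, trace_smul, Complex.add_re, Complex.smul_re, hconj,
    smul_eq_mul, trace_kronecker_one_mul]
  ring

variable [DecidableEq ι] {p q : ℝ≥0∞}

theorem exists_posSemidef_dominationMatrix (hq : 1 ≤ q) {C : ℝ} (hC : 0 ≤ C)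
    {w : Matrix (ι × ν) (ι × ν) ℂ}
    (hw : ∀ α β : Matrix ι ι ℂ, α.IsHermitian → β.IsHermitian →
      ∀ E Z : Matrix (ι × ν) ((ι × ν) ⊕ (ι × ν)) ℂ,
      flattenRows E * (flattenRows E)ᴴ = α * α → flattenRows Z * (flattenRows Z)ᴴ = β * β →
      ‖(w * (Z * Eᴴ)).trace‖ ≤ C * (schattenNorm (2 * q) α * schattenNorm (2 * q) β)) :
    ∃ s ∈ schattenPolar ι q, ∃ t ∈ schattenPolar ι q, (dominationMatrix C w (s, t)).PosSemidef := by
  have htest : ∀ D ∈ schattenPolar ((ι × ν) ⊕ (ι × ν)) q,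
      ∃ st ∈ schattenPolar ι q ×ˢ schattenPolar ι q,
        0 ≤ (dominationMatrix C w st * D).trace.re := fun D hD => by
    obtain ⟨G, hG, rfl⟩ := exists_isHermitian_mul_self_of_posSemidef hD.1
    obtain ⟨α, hα, hαE⟩ := exists_isHermitian_mul_self_of_posSemidef
      (posSemidef_self_mul_conjTranspose (flattenRows G.toRows₁))
    obtain ⟨β, hβ, hβZ⟩ := exists_isHermitian_mul_self_of_posSemidef
      (posSemidef_self_mul_conjTranspose (flattenRows G.toRows₂))
    obtain ⟨s, hs, hsα⟩ := exists_mem_schattenPolar_sq_le_trace hq α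
    obtain ⟨t, ht, htβ⟩ := exists_mem_schattenPolar_sq_le_trace hq β
    have hbound := neg_le_of_abs_le
      ((Complex.abs_re_le_norm _).trans (hw α β hα hβ _ _ hαE.symm hβZ.symm))
    have hrows : G * G =
        fromRows G.toRows₁ G.toRows₂ * (fromRows G.toRows₁ G.toRows₂)ᴴ := by
      rw [fromRows_toRows, hG.eq]
    rw [hα.eq, hαE] at hsα
    rw [hβ.eq, hβZ] at htβ
    refine ⟨(s, t), ⟨hs, ht⟩, ?_⟩
    rw [hrows, trace_dominationMatrix_mul_re]
    nlinarith [mul_nonneg hC (sq_nonneg (schattenNorm (2 * q) α - schattenNorm (2 * q) β)),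
      mul_le_mul_of_nonneg_left (add_le_add hsα htβ) hC]
  obtain ⟨⟨s, t⟩, ⟨hs, ht⟩, hst⟩ := exists_posSemidef_of_forall_mem_schattenPolar hq
    ((isCompact_schattenPolar hq).prod (isCompact_schattenPolar hq))
    (convex_schattenPolar.prod convex_schattenPolar)
    ⟨0, zero_mem_schattenPolar, zero_mem_schattenPolar⟩
    (continuous_dominationMatrix C w) (dominationMatrix_affine C w)
    (fun st hst => isHermitian_dominationMatrix C w hst.1.1.1 hst.2.1.1) htest
  exact ⟨s, hs, t, ht, hst⟩

theorem exists_eq_mul_of_posSemidef_dominationMatrix {C : ℝ} (hC : 0 ≤ C)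
    {w : Matrix (ι × ν) (ι × ν) ℂ} {c d : Matrix ι ι ℂ} (hc : c.IsHermitian) (hd : d.IsHermitian)
    (h : (dominationMatrix C w (c * c, d * d)).PosSemidef) :
    ∃ y : Matrix (ι × ν) (ι × ν) ℂ, ‖y‖ ≤ C ∧
      w = (c ⊗ₖ (1 : Matrix ν ν ℂ)) * y * (d ⊗ₖ (1 : Matrix ν ν ℂ)) := by
  obtain ⟨G, hG, hGG⟩ := exists_isHermitian_mul_self_of_posSemidef h
  have hrows : fromRows G.toRows₁ G.toRows₂ * (fromRows G.toRows₁ G.toRows₂)ᴴ =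
      dominationMatrix C w (c * c, d * d) := by
    rw [fromRows_toRows, hG.eq, hGG]
  rw [conjTranspose_fromRows_eq_fromCols_conjTranspose, fromRows_mul_fromCols, dominationMatrix,
    fromBlocks_inj] at hrows
  obtain ⟨hc_block, hw_block, -, hd_block⟩ := hrows
  have hsqrt : ∀ a : Matrix ι ι ℂ, C • ((a * a) ⊗ₖ (1 : Matrix ν ν ℂ)) =
      (√C • (a ⊗ₖ (1 : Matrix ν ν ℂ))) * (√C • (a ⊗ₖ (1 : Matrix ν ν ℂ))) := fun a => by
    rw [Matrix.smul_mul, Matrix.mul_smul, smul_smul, Real.mul_self_sqrt hC, ← mul_kronecker_mul,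
      Matrix.one_mul]
  have hherm : ∀ a : Matrix ι ι ℂ, a.IsHermitian →
      (√C • (a ⊗ₖ (1 : Matrix ν ν ℂ))).IsHermitian := fun a ha => by
    rw [IsHermitian, conjTranspose_smul, conjTranspose_kronecker, ha.eq, conjTranspose_one,
      star_trivial]
  obtain ⟨K, hK, hGK⟩ := exists_norm_le_one_eq_mul (hherm c hc) (hc_block.trans (hsqrt c))
  obtain ⟨L, hL, hGL⟩ := exists_norm_le_one_eq_mul (hherm d hd) (hd_block.trans (hsqrt d))
  refine ⟨C • (K * Lᴴ), ?_, ?_⟩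
  · calc ‖C • (K * Lᴴ)‖ ≤ C * (‖K‖ * ‖L‖) := by
          rw [norm_smul, Real.norm_of_nonneg hC, ← l2_opNorm_conjTranspose L]
          exact mul_le_mul_of_nonneg_left (l2_opNorm_mul _ _) hC
      _ ≤ C := mul_le_of_le_one_right hC (mul_le_one₀ hK (norm_nonneg _) hL)
  · rw [← hw_block, hGK, hGL, conjTranspose_mul, (hherm d hd).eq]
    simp only [Matrix.smul_mul, Matrix.mul_smul, Matrix.mul_assoc, smul_smul,
      Real.mul_self_sqrt hC]

theorem pisierNorm_le_of_posSemidef_dominationMatrix {m n : ℕ} [p.HolderConjugate q]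
    {C : ℝ} (hC : 0 ≤ C) {w : Matrix (Fin m × Fin n) (Fin m × Fin n) ℂ}
    {s t : Matrix (Fin m) (Fin m) ℂ} (hs : s ∈ schattenPolar (Fin m) q)
    (ht : t ∈ schattenPolar (Fin m) q) (hst : (dominationMatrix C w (s, t)).PosSemidef) :
    pisierNorm p w ≤ C := by
  have hnorm : ∀ a : Matrix (Fin m) (Fin m) ℂ, a.IsHermitian →
      a * a ∈ schattenPolar (Fin m) q → schattenNorm (2 * p) a ≤ 1 := fun a ha haa =>
    (conjTranspose_mul_self_mem_schattenPolar_iff (q := q)).1 (by rwa [ha.eq])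
  obtain ⟨c, hc, rfl⟩ := exists_isHermitian_mul_self_of_posSemidef hs.1
  obtain ⟨d, hd, rfl⟩ := exists_isHermitian_mul_self_of_posSemidef ht.1
  obtain ⟨y, hy, rfl⟩ := exists_eq_mul_of_posSemidef_dominationMatrix hC hc hd hst
  calc _ ≤ schattenNorm (2 * p) c * ‖y‖ * schattenNorm (2 * p) d := pisierNorm_mul_mul_le p c d y
    _ ≤ 1 * C * 1 := by
      have := schattenNorm_nonneg (2 * p) c
      have := schattenNorm_nonneg (2 * p) d
      gcongr
      · exact hnorm c hc hs
      · exact hnorm d hd ht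
    _ = C := by ring

theorem pisierNorm_le_of_norm_trace_le {m n : ℕ} [h : p.HolderConjugate q] {C : ℝ} (hC : 0 ≤ C)
    {w : Matrix (Fin m × Fin n) (Fin m × Fin n) ℂ}
    (hw : ∀ α β : Matrix (Fin m) (Fin m) ℂ, α.IsHermitian → β.IsHermitian →
      ∀ E Z : Matrix (Fin m × Fin n) ((Fin m × Fin n) ⊕ (Fin m × Fin n)) ℂ,
      flattenRows E * (flattenRows E)ᴴ = α * α → flattenRows Z * (flattenRows Z)ᴴ = β * β →
      ‖(w * (Z * Eᴴ)).trace‖ ≤ C * (schattenNorm (2 * q) α * schattenNorm (2 * q) β)) :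
    pisierNorm p w ≤ C := by
  have hq : 1 ≤ q := have := h.symm; ENNReal.HolderConjugate.one_le q p
  obtain ⟨s, hs, t, ht, hst⟩ := exists_posSemidef_dominationMatrix hq hC hw
  exact pisierNorm_le_of_posSemidef_dominationMatrix hC hs ht hst

end Domination

section TraceAdjoint

open scoped Matrix.Norms.L2Operator

variable {N m n : ℕ} {p q : ℝ≥0∞} {u : Matrix (Fin N) (Fin N) ℂ →ₗ[ℂ] Matrix (Fin m) (Fin m) ℂ}
  {v : Matrix (Fin m) (Fin m) ℂ →ₗ[ℂ] Matrix (Fin N) (Fin N) ℂ}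

theorem pisierNorm_amp_le_of_trace_adjoint [p.HolderConjugate q]
    (hadj : ∀ x y, (u x * y).trace = (x * v y).trace) (hv : regNorm q v ≠ ⊤)
    (x : Matrix (Fin N × Fin n) (Fin N × Fin n) ℂ) :
    pisierNorm p (amp u x) ≤ (regNorm q v).toReal * pisierNorm p x := by
  have hv0 : 0 ≤ (regNorm q v).toReal := ENNReal.toReal_nonneg
  refine le_mul_pisierNorm hv0 fun γ δ y hx => ?_
  have hγ := schattenNorm_nonneg (2 * p) γ
  have hδ := schattenNorm_nonneg (2 * p) δ
  refine pisierNorm_le_of_norm_trace_le (q := q)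
    (mul_nonneg hv0 (mul_nonneg (mul_nonneg hγ (norm_nonneg y)) hδ)) fun α β hα hβ E Z hE hZ => ?_
  calc ‖(amp u x * (Z * Eᴴ)).trace‖
      ≤ schattenNorm (2 * p) δ * schattenNorm (2 * p) γ *
          ((regNorm q v).toReal * pisierNorm q (contraction (Z * Eᴴ) y)) := by
        rw [hx]
        exact norm_trace_amp_mul_le hadj hv γ δ y (Z * Eᴴ)
    _ ≤ schattenNorm (2 * p) δ * schattenNorm (2 * p) γ * ((regNorm q v).toReal *
          (schattenNorm (2 * q) β * ‖y‖ * schattenNorm (2 * q) α)) := by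
        gcongr
        exact pisierNorm_contraction_le hα hβ hE hZ y
    _ = _ := by ring

theorem regNorm_le_of_trace_adjoint [p.HolderConjugate q]
    (hadj : ∀ x y, (u x * y).trace = (x * v y).trace) : regNorm p u ≤ regNorm q v := by
  by_cases hv : regNorm q v = ⊤
  · exact hv ▸ le_top
  · refine iSup_le fun n => iSup₂_le fun x hx => ENNReal.ofReal_le_of_le_toReal ?_
    exact (pisierNorm_amp_le_of_trace_adjoint hadj hv x).trans
      (mul_le_of_le_one_right ENNReal.toReal_nonneg hx)

theorem regNorm_trace_adjoint_general (p q : ℝ≥0∞) (hpq : p⁻¹ + q⁻¹ = 1)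
    (u : Matrix (Fin N) (Fin N) ℂ →ₗ[ℂ] Matrix (Fin m) (Fin m) ℂ)
    (v : Matrix (Fin m) (Fin m) ℂ →ₗ[ℂ] Matrix (Fin N) (Fin N) ℂ)
    (hadj : ∀ (x : Matrix (Fin N) (Fin N) ℂ) (y : Matrix (Fin m) (Fin m) ℂ),
      (u x * y).trace = (x * v y).trace) : regNorm p u = regNorm q v := by
  have hpq : p.HolderConjugate q := ENNReal.holderConjugate_iff.2 hpq
  have hqp := hpq.symm
  refine le_antisymm (regNorm_le_of_trace_adjoint hadj) (regNorm_le_of_trace_adjoint fun y x => ?_)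
  rw [trace_mul_comm, ← hadj, trace_mul_comm]

end TraceAdjoint

/-- Matrix-algebra case of the second part of Lemma 2.3: the regular norm of `u` relative to `p`
equals the regular norm of its trace adjoint relative to the conjugate exponent `p'`. -/
theorem regNorm_trace_adjoint {N : ℕ} (p q : ℝ≥0∞) (hp : 1 ≤ p) (hpq : p⁻¹ + q⁻¹ = 1)
    (u v : Matrix (Fin N) (Fin N) ℂ →ₗ[ℂ] Matrix (Fin N) (Fin N) ℂ)
    (hadj : ∀ x y : Matrix (Fin N) (Fin N) ℂ, (u x * y).trace = (x * v y).trace) :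
    regNorm p (⇑u) = regNorm q (⇑v) := by
  exact regNorm_trace_adjoint_general p q hpq u v hadj
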